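/- Let S be a stable matching in G*. Then S' is a maximum matching in G, i.e., there is no augmenting path in G with respect to S'. -/

import Mathlib

open Classical

noncomputable section

namespace PopMax

/-- A bipartite preference instance `G = (A ∪ B, E)`:
`E a b` says there is an edge between `a ∈ A` and `b ∈ B`;
`prefA a b b'` says `a` strictly prefers `b` to `b'`;
`prefB b a a'` says `b` strictly prefers `a` to `a'`. -/
structure PrefSys (A : Type*) (B : Type*) where
  E : A → B → Prop
  prefA : A → B → B → Prop
  prefB : B → A → A → Prop

/-- Every node has a strict (linear) preference order over its neighbors. -/
def PrefSys.IsValid {A B : Type*} (I : PrefSys A B) : Prop :=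
  (∀ a b, ¬ I.prefA a b b) ∧
  (∀ a b₁ b₂ b₃, I.prefA a b₁ b₂ → I.prefA a b₂ b₃ → I.prefA a b₁ b₃) ∧
  (∀ a b₁ b₂, I.E a b₁ → I.E a b₂ → b₁ ≠ b₂ → I.prefA a b₁ b₂ ∨ I.prefA a b₂ b₁) ∧
  (∀ b a, ¬ I.prefB b a a) ∧
  (∀ b a₁ a₂ a₃, I.prefB b a₁ a₂ → I.prefB b a₂ a₃ → I.prefB b a₁ a₃) ∧
  (∀ b a₁ a₂, I.E a₁ b → I.E a₂ b → a₁ ≠ a₂ → I.prefB b a₁ a₂ ∨ I.prefB b a₂ a₁)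

variable {A B : Type*}

/-- A matching: a set of pairwise disjoint edges. -/
def IsMatching (I : PrefSys A B) (M : Finset (A × B)) : Prop :=
  (∀ p ∈ M, I.E p.1 p.2) ∧
  (∀ p ∈ M, ∀ q ∈ M, p.1 = q.1 → p = q) ∧
  (∀ p ∈ M, ∀ q ∈ M, p.2 = q.2 → p = q)

def matchedA (M : Finset (A × B)) (a : A) : Prop := ∃ b, (a, b) ∈ M
def matchedB (M : Finset (A × B)) (b : B) : Prop := ∃ a, (a, b) ∈ M

/-- A maximum matching: a matching of maximum cardinality. -/
def IsMaximumMatching (I : PrefSys A B) (M : Finset (A × B)) : Prop :=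
  IsMatching I M ∧ ∀ N : Finset (A × B), IsMatching I N → N.card ≤ M.card

/-- A perfect matching matches all nodes. -/
def IsPerfectMatching (I : PrefSys A B) (M : Finset (A × B)) : Prop :=
  IsMatching I M ∧ (∀ a, matchedA M a) ∧ (∀ b, matchedB M b)

/-- `a ∈ A` prefers matching `M` to matching `N`. -/
def prefersA (I : PrefSys A B) (a : A) (M N : Finset (A × B)) : Prop :=
  ∃ b, (a, b) ∈ M ∧ (¬ matchedA N a ∨ ∃ b', (a, b') ∈ N ∧ I.prefA a b b')

/-- `b ∈ B` prefers matching `M` to matching `N`. -/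
def prefersB (I : PrefSys A B) (b : B) (M N : Finset (A × B)) : Prop :=
  ∃ a, (a, b) ∈ M ∧ (¬ matchedB N b ∨ ∃ a', (a', b) ∈ N ∧ I.prefB b a a')

/-- A node `u ∈ A ∪ B` prefers matching `M` to matching `N`. -/
def prefers (I : PrefSys A B) (u : A ⊕ B) (M N : Finset (A × B)) : Prop :=
  match u with
  | Sum.inl a => prefersA I a M N
  | Sum.inr b => prefersB I b M N

/-- `φ(M,N)`: the number of nodes preferring `M` to `N`. -/
def phi [Fintype A] [Fintype B] (I : PrefSys A B) (M N : Finset (A × B)) : ℕ :=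
  (Finset.univ.filter (fun u : A ⊕ B => prefers I u M N)).card

/-- `Δ(M,N) = φ(M,N) − φ(N,M)`. -/
def Delta [Fintype A] [Fintype B] (I : PrefSys A B) (M N : Finset (A × B)) : ℤ :=
  (phi I M N : ℤ) - (phi I N M : ℤ)

/-- A popular max-matching: a maximum matching `M` with `Δ(M,N) ≥ 0`
for every maximum matching `N`. -/
def IsPopularMaxMatching [Fintype A] [Fintype B] (I : PrefSys A B)
    (M : Finset (A × B)) : Prop :=
  IsMaximumMatching I M ∧
    ∀ N : Finset (A × B), IsMaximumMatching I N → 0 ≤ Delta I M N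

/-- The edge `(a,b) ∉ M` blocks `M`. -/
def Blocks (I : PrefSys A B) (M : Finset (A × B)) (a : A) (b : B) : Prop :=
  I.E a b ∧ (a, b) ∉ M ∧
  (¬ matchedA M a ∨ ∃ b', (a, b') ∈ M ∧ I.prefA a b b') ∧
  (¬ matchedB M b ∨ ∃ a', (a', b) ∈ M ∧ I.prefB b a a')

/-- A stable matching: a matching with no blocking edge. -/
def IsStable (I : PrefSys A B) (S : Finset (A × B)) : Prop :=
  IsMatching I S ∧ ∀ a b, ¬ Blocks I S a b

/-- The edge weight `wt_M(a,b) ∈ {0, ±2}`. -/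
def wt (I : PrefSys A B) (M : Finset (A × B)) (a : A) (b : B) : ℤ :=
  if Blocks I M a b then 2
  else if (∃ b', (a, b') ∈ M ∧ I.prefA a b' b) ∧ (∃ a', (a', b) ∈ M ∧ I.prefB b a' a) then -2
  else 0

/-- The underlying simple graph on the node set `A ⊕ B`. -/
def graphOf (I : PrefSys A B) : SimpleGraph (A ⊕ B) :=
  SimpleGraph.fromRel (fun u w =>
    match u, w with
    | Sum.inl a, Sum.inr b => I.E a b
    | _, _ => False)

/-- The (undirected) edge `e` is an edge of the matching `M`. -/
def edgeInM (M : Finset (A × B)) (e : Sym2 (A ⊕ B)) : Prop :=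
  ∃ a b, (a, b) ∈ M ∧ e = s(Sum.inl a, Sum.inr b)

/-- Consecutive edges alternate between `M` and `E ∖ M`. -/
def altRel (M : Finset (A × B)) (e f : Sym2 (A ⊕ B)) : Prop :=
  edgeInM M e ↔ ¬ edgeInM M f

/-- An alternating path with respect to `M`. -/
def IsAltPath (I : PrefSys A B) (M : Finset (A × B)) {u w : A ⊕ B}
    (p : (graphOf I).Walk u w) : Prop :=
  p.IsPath ∧ List.Chain' (altRel M) p.edges

/-- An alternating cycle with respect to `M` (alternation also across the wrap-around). -/
def IsAltCycle (I : PrefSys A B) (M : Finset (A × B)) {w : A ⊕ B}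
    (c : (graphOf I).Walk w w) : Prop :=
  c.IsCycle ∧ List.Chain' (altRel M) (c.edges ++ c.edges.take 1)

/-- `wt_M` as a function on undirected edges. -/
def wtSym (I : PrefSys A B) (M : Finset (A × B)) : Sym2 (A ⊕ B) → ℤ :=
  Sym2.lift ⟨fun u w =>
      match u, w with
      | Sum.inl a, Sum.inr b => wt I M a b
      | Sum.inr b, Sum.inl a => wt I M a b
      | _, _ => 0,
    by rintro (a | b) (a' | b') <;> rfl⟩

/-- `wt_M(ρ) = Σ_{e ∈ ρ} wt_M(e)` for a walk `ρ`. -/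
def wtWalk (I : PrefSys A B) (M : Finset (A × B)) {u w : A ⊕ B}
    (p : (graphOf I).Walk u w) : ℤ :=
  (p.edges.map (wtSym I M)).sum

/-- The node `u ∈ A ∪ B` is unmatched in `M`. -/
def unmatchedNode (M : Finset (A × B)) : A ⊕ B → Prop
  | Sum.inl a => ¬ matchedA M a
  | Sum.inr b => ¬ matchedB M b

/-- The set of edges `(a,b) ∈ A × B` used by the walk `p`. -/
def pairsOf [Fintype A] [Fintype B] (I : PrefSys A B) {u w : A ⊕ B}
    (p : (graphOf I).Walk u w) : Finset (A × B) :=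
  Finset.univ.filter (fun ab : A × B => s(Sum.inl ab.1, Sum.inr ab.2) ∈ p.edges)

/-- `M` is Pareto-optimal: no matching `N` has `φ(N,M) > 0` and `φ(M,N) = 0`. -/
def IsParetoOptimal [Fintype A] [Fintype B] (I : PrefSys A B) (M : Finset (A × B)) : Prop :=
  ¬ ∃ N : Finset (A × B), IsMatching I N ∧ 0 < phi I N M ∧ phi I M N = 0

/-! ### The auxiliary instance `G*` -/

/-- `A* = {a_0, …, a_{n0−1} : a ∈ A}` where `n0 = |A|`. -/
abbrev AStar (A : Type*) [Fintype A] : Type _ := A × Fin (Fintype.card A)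

/-- `B* = B̃ ∪ {d_1(a), …, d_{n0−1}(a) : a ∈ A}`; the dummy node `(a, j)`
(with `j : Fin (n0 − 1)`) stands for `d_{j+1}(a)`. -/
abbrev BStar (A : Type*) (B : Type*) [Fintype A] : Type _ :=
  B ⊕ (A × Fin (Fintype.card A - 1))

/-- The auxiliary instance `G*` with its edges and preferences. -/
def starSys [Fintype A] (I : PrefSys A B) : PrefSys (AStar A) (BStar A B) where
  E := fun ai w =>
    match ai, w with
    | (a, _i), Sum.inl b => I.E a b
    | (a, i), Sum.inr (a', j) => a = a' ∧ ((i : ℕ) = (j : ℕ) ∨ (i : ℕ) = (j : ℕ) + 1)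
  prefA := fun ai u v =>
    match ai, u, v with
    | (a, _i), Sum.inl b, Sum.inl b' => I.prefA a b b'
    | (a, i), Sum.inl _b, Sum.inr (a', j) => a = a' ∧ (j : ℕ) = (i : ℕ)
    | (a, i), Sum.inr (a', j), Sum.inl _b => a = a' ∧ (j : ℕ) + 1 = (i : ℕ)
    | (a, i), Sum.inr (a', j), Sum.inr (a'', j') =>
        a = a' ∧ a = a'' ∧ (j : ℕ) + 1 = (i : ℕ) ∧ (j' : ℕ) = (i : ℕ)
  prefB := fun w x y =>
    match w, x, y with
    | Sum.inl b, (a, i), (a', i') =>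
        (i' : ℕ) < (i : ℕ) ∨ ((i : ℕ) = (i' : ℕ) ∧ I.prefB b a a')
    | Sum.inr (a, j), (a', i), (a'', i') =>
        a' = a ∧ a'' = a ∧ (i : ℕ) = (j : ℕ) ∧ (i' : ℕ) = (j : ℕ) + 1

/-- The projection `S ↦ S'`: delete edges incident to dummy nodes and replace
`(a_i, b̃)` by `(a, b)`. -/
def proj [Fintype A] [Fintype B] (S : Finset (AStar A × BStar A B)) : Finset (A × B) :=
  Finset.univ.filter (fun ab : A × B =>
    ∃ i : Fin (Fintype.card A), ((ab.1, i), (Sum.inl ab.2 : BStar A B)) ∈ S)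

/-- `a ∈ A_i` for the level partition of `A` induced by a (stable) matching `S` in `G*`:
for `i ≤ n0 − 2`, `a ∈ A_i` iff `(a_i, b̃) ∈ S` for some `b̃ ∈ B̃`;
`A_{n0−1}` consists of all remaining nodes of `A`. -/
def AtLevelA [Fintype A] (S : Finset (AStar A × BStar A B)) (a : A) (i : ℕ) : Prop :=
  (i + 1 < Fintype.card A ∧
     ∃ j : Fin (Fintype.card A), (j : ℕ) = i ∧
       ∃ b : B, ((a, j), (Sum.inl b : BStar A B)) ∈ S) ∨
  (i + 1 = Fintype.card A ∧
     ∀ j : Fin (Fintype.card A), (j : ℕ) + 1 < Fintype.card A →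
       ∀ b : B, ((a, j), (Sum.inl b : BStar A B)) ∉ S)

/-- `b ∈ B_i` for the level partition of `B` induced by a (stable) matching `S` in `G*`:
for `1 ≤ i ≤ n0 − 1`, `b ∈ B_i` iff `(a_i, b̃) ∈ S` for some `a ∈ A_i`;
`B_0` consists of all remaining nodes of `B`. -/
def AtLevelB [Fintype A] (S : Finset (AStar A × BStar A B)) (b : B) (i : ℕ) : Prop :=
  (1 ≤ i ∧ i < Fintype.card A ∧
     ∃ j : Fin (Fintype.card A), (j : ℕ) = i ∧
       ∃ a : A, AtLevelA S a i ∧ ((a, j), (Sum.inl b : BStar A B)) ∈ S) ∨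
  (i = 0 ∧ ∀ j : Fin (Fintype.card A), 1 ≤ (j : ℕ) →
       ∀ a : A, AtLevelA S a (j : ℕ) → ((a, j), (Sum.inl b : BStar A B)) ∉ S)

/-!
Say that `a` or `b` is *matched at level `i`* if `(a_i, b̃) ∈ S`. A node of `A` is matched at one
level at most, since all dummies are matched: if `a_i` takes a real node then the dummies
`d_{i+1}(a), d_{i+2}(a), …` are left for `a_{i+1}, a_{i+2}, …`. By pigeonhole some level `t` is
empty, with `t < n0` unless all of `A` is matched. If `a` is not matched below level `t`, then `a_t`
is unmatched or holds its last choice `d_{t+1}(a)`, so stability forces every neighbor of `a` to be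
matched at level `t` or above, hence above. The nodes of `A` matched below `t` and the nodes of `B`
matched above `t` therefore cover all edges, and each edge of `S'` contains exactly one of them.
-/

section Matching

variable {I : PrefSys A B} {M : Finset (A × B)} {a a' : A} {b b' : B}

lemma IsMatching.right_unique (hM : IsMatching I M) (h : (a, b) ∈ M) (h' : (a, b') ∈ M) :
    b = b' :=
  congrArg Prod.snd (hM.2.1 _ h _ h' rfl)

lemma IsMatching.left_unique (hM : IsMatching I M) (h : (a, b) ∈ M) (h' : (a', b) ∈ M) :
    a = a' :=
  congrArg Prod.fst (hM.2.2 _ h _ h' rfl)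

theorem IsMatching.isMaximumMatching_of_cover (hM : IsMatching I M) (X : Set A) (Y : Set B)
    (cover : ∀ a b, I.E a b → a ∈ X ∨ b ∈ Y) (matchedX : ∀ a ∈ X, matchedA M a)
    (matchedY : ∀ b ∈ Y, matchedB M b) (tight : ∀ a b, (a, b) ∈ M → a ∈ X → b ∉ Y) :
    IsMaximumMatching I M := by
  refine ⟨hM, fun N hN => Finset.card_le_card_of_forall_subsingleton
    (fun p m => p.1 = m.1 ∧ m.1 ∈ X ∨ p.2 = m.2 ∧ m.2 ∈ Y) ?_ ?_⟩
  · rintro ⟨a, b⟩ hab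
    rcases cover a b (hN.1 _ hab) with haX | hbY
    · obtain ⟨b', hab'⟩ := matchedX a haX
      exact ⟨(a, b'), hab', .inl ⟨rfl, haX⟩⟩
    · obtain ⟨a', ha'b⟩ := matchedY b hbY
      exact ⟨(a', b), ha'b, .inr ⟨rfl, hbY⟩⟩
  · rintro m hm p ⟨hp, ⟨hpm, hX⟩ | ⟨hpm, hY⟩⟩ q ⟨hq, ⟨hqm, hX'⟩ | ⟨hqm, hY'⟩⟩
    · exact hN.2.1 _ hp _ hq (hpm.trans hqm.symm)
    · exact (tight _ _ hm hX hY').elim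
    · exact (tight _ _ hm hX' hY).elim
    · exact hN.2.2 _ hp _ hq (hpm.trans hqm.symm)

lemma IsStable.exists_partner (hM : IsStable I M) (hE : I.E a b)
    (hpref : ∀ b', (a, b') ∈ M → b' = b ∨ I.prefA a b b') :
    ∃ a', (a', b) ∈ M ∧ (a' = a ∨ ¬ I.prefB b a a') := by
  by_contra! hworse
  have hab : (a, b) ∉ M := fun h => (hworse a h).1 rfl
  refine hM.2 a b ⟨hE, hab, ?_, ?_⟩
  · refine or_iff_not_imp_left.2 fun hmatched => ?_
    obtain ⟨b', hb'⟩ := not_not.1 hmatched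
    exact ⟨b', hb', (hpref b' hb').resolve_left fun h => hab (h ▸ hb')⟩
  · refine or_iff_not_imp_left.2 fun hmatched => ?_
    obtain ⟨a', ha'⟩ := not_not.1 hmatched
    exact ⟨a', ha', (hworse a' ha').2⟩

end Matching

/-- The edge `(a_i, b̃)` belongs to `S`; the level `i` is a natural number, and the proposition is
false when `i ≥ n0`. -/
def RealEdge [Fintype A] (S : Finset (AStar A × BStar A B)) (a : A) (i : ℕ) (b : B) : Prop :=
  ∃ hi : i < Fintype.card A, ((a, ⟨i, hi⟩), Sum.inl b) ∈ S

/-- The edge `(a_i, d_j(a))` belongs to `S`; here `j` is the paper's index, which is one more than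
the element of `Fin (n0 - 1)` encoding the dummy. -/
def DummyEdge [Fintype A] (S : Finset (AStar A × BStar A B)) (a : A) (i j : ℕ) : Prop :=
  ∃ (hi : i < Fintype.card A) (d : Fin (Fintype.card A - 1)),
    (d : ℕ) + 1 = j ∧ ((a, ⟨i, hi⟩), Sum.inr (a, d)) ∈ S

section Star

variable [Fintype A] {I : PrefSys A B} {S : Finset (AStar A × BStar A B)} {a a' : A} {b b' : B}
  {i i' j j' k : ℕ}

lemma RealEdge.adj (hS : IsMatching (starSys I) S) (h : RealEdge S a i b) : I.E a b := by
  obtain ⟨_, h⟩ := h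
  exact hS.1 _ h

lemma RealEdge.right_unique (hS : IsMatching (starSys I) S) (h : RealEdge S a i b)
    (h' : RealEdge S a i b') : b = b' := by
  obtain ⟨_, h⟩ := h
  obtain ⟨_, h'⟩ := h'
  exact Sum.inl_injective (hS.right_unique h h')

lemma RealEdge.left_unique (hS : IsMatching (starSys I) S) (h : RealEdge S a i b)
    (h' : RealEdge S a' i' b) : a = a' ∧ i = i' := by
  obtain ⟨_, h⟩ := h
  obtain ⟨_, h'⟩ := h'
  simpa using hS.left_unique h h'

lemma RealEdge.not_dummyEdge (hS : IsMatching (starSys I) S) (h : RealEdge S a i b) :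
    ¬ DummyEdge S a i j := by
  rintro ⟨_, d, _, hd⟩
  obtain ⟨_, h⟩ := h
  exact Sum.inl_ne_inr (hS.right_unique h hd)

lemma DummyEdge.right_unique (hS : IsMatching (starSys I) S) (h : DummyEdge S a i j)
    (h' : DummyEdge S a i j') : j = j' := by
  obtain ⟨_, d, rfl, h⟩ := h
  obtain ⟨_, d', rfl, h'⟩ := h'
  simpa [Fin.ext_iff] using hS.right_unique h h'

lemma realEdge_or_dummyEdge_of_mem (hS : IsMatching (starSys I) S) {hi : i < Fintype.card A}
    {w : BStar A B} (h : ((a, ⟨i, hi⟩), w) ∈ S) :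
    (∃ b, RealEdge S a i b) ∨ DummyEdge S a i i ∨
      ∃ d : Fin (Fintype.card A - 1), (d : ℕ) = i ∧ w = Sum.inr (a, d) := by
  rcases w with b | ⟨a', d⟩
  · exact .inl ⟨b, hi, h⟩
  · obtain ⟨rfl : a = a', hid : i = d ∨ i = d + 1⟩ := hS.1 _ h
    rcases hid with hid | hid
    · exact .inr (.inr ⟨d, hid.symm, rfl⟩)
    · exact .inr (.inl ⟨hi, d, hid.symm, h⟩)

-- `d_{k+1}(a)` is the first choice of `a_{k+1}`, so it cannot stay unmatched.
lemma dummyEdge_or_dummyEdge_succ (hS : IsStable (starSys I) S) (hk : k + 1 < Fintype.card A) :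
    DummyEdge S a k (k + 1) ∨ DummyEdge S a (k + 1) (k + 1) := by
  let d : Fin (Fintype.card A - 1) := ⟨k, by omega⟩
  obtain ⟨⟨a', i, hi⟩, hmem, -⟩ :=
    hS.exists_partner (a := (a, ⟨k + 1, hk⟩)) (b := Sum.inr (a, d)) ⟨rfl, .inr rfl⟩ (by
      rintro (b | ⟨a', d'⟩) hmem
      · exact .inr ⟨rfl, rfl⟩
      · obtain ⟨rfl : a = a', hd' : k + 1 = d' ∨ k + 1 = d' + 1⟩ := hS.1.1 _ hmem
        rcases hd' with hd' | hd'
        · exact .inr ⟨rfl, rfl, rfl, hd'.symm⟩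
        · obtain rfl : d' = d := Fin.ext (Nat.succ_injective hd'.symm)
          exact .inl rfl)
  obtain ⟨rfl : a' = a, rfl | rfl : i = k ∨ i = k + 1⟩ := hS.1.1 _ hmem
  · exact .inl ⟨hi, d, rfl, hmem⟩
  · exact .inr ⟨hi, d, rfl, hmem⟩

lemma RealEdge.dummyEdge_of_lt (hS : IsStable (starSys I) S) (h : RealEdge S a i b)
    (hij : i < j) (hj : j < Fintype.card A) : DummyEdge S a j j := by
  induction j, hij using Nat.le_induction with
  | base => exact (dummyEdge_or_dummyEdge_succ hS hj).resolve_left (h.not_dummyEdge hS.1)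
  | succ j _ ih =>
    refine (dummyEdge_or_dummyEdge_succ hS hj).resolve_left fun hup => ?_
    exact j.succ_ne_self ((ih (Nat.lt_of_succ_lt hj)).right_unique hS.1 hup).symm

lemma RealEdge.level_unique (hS : IsStable (starSys I) S) (h : RealEdge S a i b)
    (h' : RealEdge S a i' b') : i = i' := by
  rcases lt_trichotomy i i' with hlt | heq | hgt
  · exact (h'.not_dummyEdge hS.1 (h.dummyEdge_of_lt hS hlt h'.1)).elim
  · exact heq
  · exact (h.not_dummyEdge hS.1 (h'.dummyEdge_of_lt hS hgt h.1)).elim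

-- Otherwise `d_{k+1}(a)` would be held by `a_{k+1}` although it prefers `a_k`, for which
-- `d_{k+1}(a)` is by induction the only possible partner.
lemma not_dummyEdge_of_forall_lt (hS : IsStable (starSys I) S)
    (hreal : ∀ i < k, ∀ b, ¬ RealEdge S a i b) : ¬ DummyEdge S a k k := by
  induction k with
  | zero => exact fun ⟨_, _, h, _⟩ => Nat.succ_ne_zero _ h
  | succ k ih =>
    rintro ⟨hk, d, hd, hmem⟩
    obtain rfl : (d : ℕ) = k := Nat.succ_injective hd
    have ih := ih fun i hi => hreal i (hi.trans (Nat.lt_succ_self _))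
    obtain ⟨x, hx, hpref⟩ :=
      hS.exists_partner (a := (a, ⟨d, Nat.lt_of_succ_lt hk⟩)) (b := Sum.inr (a, d))
        ⟨rfl, .inl rfl⟩ fun w hw => by
          rcases realEdge_or_dummyEdge_of_mem hS.1 hw with ⟨b, hb⟩ | hdown | ⟨d', hd', rfl⟩
          · exact (hreal d (Nat.lt_succ_self _) b hb).elim
          · exact (ih hdown).elim
          · exact .inl (by rw [Fin.ext hd'])
    obtain rfl := hS.1.left_unique hmem hx
    rcases hpref with heq | hpref
    · simp at heq
    · exact hpref ⟨rfl, rfl, rfl, rfl⟩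

theorem exists_realEdge_ge_of_adj (hS : IsStable (starSys I) S) (hE : I.E a b)
    (hk : k < Fintype.card A) (hreal : ∀ i ≤ k, ∀ b, ¬ RealEdge S a i b) :
    ∃ j ≥ k, ∃ a', RealEdge S a' j b := by
  obtain ⟨⟨a', j⟩, hmem, hpref⟩ :=
    hS.exists_partner (a := (a, ⟨k, hk⟩)) (b := Sum.inl b) hE fun w hw => by
      rcases realEdge_or_dummyEdge_of_mem hS.1 hw with ⟨b', hb'⟩ | hdown | ⟨d, hd, rfl⟩
      · exact (hreal k le_rfl b' hb').elim
      · exact (not_dummyEdge_of_forall_lt hS (fun i hi => hreal i hi.le) hdown).elim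
      · exact .inr ⟨rfl, hd⟩
  refine ⟨j, ?_, a', j.2, hmem⟩
  rcases hpref with heq | hpref
  · obtain ⟨-, rfl⟩ := Prod.ext_iff.1 heq
    exact le_rfl
  · exact not_lt.1 fun hjk => hpref (.inl hjk)

lemma exists_realEdge_gt_of_adj (hS : IsStable (starSys I) S) (hE : I.E a b)
    (hempty : ∀ a b, ¬ RealEdge S a k b) (hk : k < Fintype.card A)
    (hbelow : ∀ i < k, ∀ b, ¬ RealEdge S a i b) : ∃ j > k, ∃ a', RealEdge S a' j b := by
  obtain ⟨j, hkj, a', h⟩ := exists_realEdge_ge_of_adj hS hE hk fun i hi b' h' =>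
    hi.lt_or_eq.elim (fun hlt => hbelow i hlt b' h') fun heq => hempty a b' (heq ▸ h')
  exact ⟨j, hkj.lt_of_ne fun heq => hempty a' b (heq ▸ h), a', h⟩

lemma exists_empty_level (hS : IsStable (starSys I) S) :
    ∃ t, (∀ a b, ¬ RealEdge S a t b) ∧
      ∀ a, (∀ i < t, ∀ b, ¬ RealEdge S a i b) → t < Fintype.card A := by
  by_cases hall : ∀ a, ∃ i b, RealEdge S a i b
  · refine ⟨Fintype.card A, fun a b h => h.1.false, fun a ha => ?_⟩
    obtain ⟨i, b, h⟩ := hall a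
    exact (ha i h.1 b h).elim
  · push Not at hall
    obtain ⟨a₀, ha₀⟩ := hall
    by_contra! hc
    have hnonempty (t : Fin (Fintype.card A)) : ∃ a b, RealEdge S a t b := by
      by_contra! hempty
      obtain ⟨_, _, hle⟩ := hc t hempty
      exact hle.not_gt t.2
    choose f g hfg using hnonempty
    have hinj : Function.Injective f := fun s t hst =>
      Fin.ext ((hfg s).level_unique hS (hst ▸ hfg t))
    have ha₀_notMem : a₀ ∉ Set.range f := by
      rintro ⟨t, rfl⟩
      exact ha₀ t (g t) (hfg t)
    simpa using Fintype.card_lt_of_injective_of_notMem f hinj ha₀_notMem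

variable [Fintype B]

lemma mem_proj : (a, b) ∈ proj S ↔ ∃ i, RealEdge S a i b := by
  simp [proj, RealEdge, Fin.exists_iff]

theorem isMatching_proj (hS : IsStable (starSys I) S) : IsMatching I (proj S) := by
  refine ⟨?_, ?_, ?_⟩
  · rintro ⟨a, b⟩ h
    obtain ⟨i, h⟩ := mem_proj.1 h
    exact h.adj hS.1
  · rintro ⟨a, b⟩ h ⟨_, b'⟩ h' rfl
    obtain ⟨i, h⟩ := mem_proj.1 h
    obtain ⟨i', h'⟩ := mem_proj.1 h'
    obtain rfl := h.level_unique hS h'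
    rw [h.right_unique hS.1 h']
  · rintro ⟨a, b⟩ h ⟨a', _⟩ h' rfl
    obtain ⟨i, h⟩ := mem_proj.1 h
    obtain ⟨i', h'⟩ := mem_proj.1 h'
    rw [(h.left_unique hS.1 h').1]

theorem stmt9_general (hS : IsStable (starSys I) S) : IsMaximumMatching I (proj S) := by
  obtain ⟨t, hempty, ht⟩ := exists_empty_level hS
  refine (isMatching_proj hS).isMaximumMatching_of_cover
    {a | ∃ i < t, ∃ b, RealEdge S a i b} {b | ∃ j > t, ∃ a, RealEdge S a j b} ?_ ?_ ?_ ?_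
  · intro a b hE
    refine or_iff_not_imp_left.2 fun ha => ?_
    have hbelow : ∀ i < t, ∀ b, ¬ RealEdge S a i b := fun i hi b h => ha ⟨i, hi, b, h⟩
    exact exists_realEdge_gt_of_adj hS hE hempty (ht a hbelow) hbelow
  · rintro a ⟨i, -, b, h⟩
    exact ⟨b, mem_proj.2 ⟨i, h⟩⟩
  · rintro b ⟨j, -, a, h⟩
    exact ⟨a, mem_proj.2 ⟨j, h⟩⟩
  · rintro a b hab ⟨i, hi, b', h⟩ ⟨j, hj, a', h'⟩
    obtain ⟨k, hk⟩ := mem_proj.1 hab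
    obtain rfl := hk.level_unique hS h
    obtain ⟨-, rfl⟩ := hk.left_unique hS.1 h'
    exact lt_asymm hi hj

end Star

/-- If `S` is a stable matching in `G*`, then `S'` is a maximum
matching in `G`. -/
theorem stmt9 {A B : Type*} [Fintype A] [Fintype B] [DecidableEq A] [DecidableEq B]
    (I : PrefSys A B) (hI : I.IsValid)
    (S : Finset (AStar A × BStar A B)) (hS : IsStable (starSys I) S) :
    IsMaximumMatching I (proj S) := by
  exact stmt9_general hS

end PopMax
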